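/- arXiv:0802.2928 — 2 statements merged into one kernel-verified Lean document; each statement's English description precedes it below -/
import Mathlib

section
/- Let A be an asymptotic basis for ℕ₀ of order h, and suppose A has exactly φ distinct essential subsets each of cardinality at most k. Then (kφ + 1)^h ≥ p_φ#, where p_φ# denotes the primorial, i.e., the product of the first φ prime numbers. -/
/-- The `h`-fold sumset of `A ⊆ ℕ`: all sums of `h`-tuples of elements of `A`. -/
def Sumset (A : Set ℕ) (h : ℕ) : Set ℕ :=
  {n | ∃ l : List ℕ, l.length = h ∧ (∀ x ∈ l, x ∈ A) ∧ l.sum = n}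

/-- `A` is an asymptotic basis for `ℕ` of order `h`. -/
def IsBasisOfOrder (A : Set ℕ) (h : ℕ) : Prop :=
  0 ∈ A ∧ 1 ≤ h ∧ (Sumset A h)ᶜ.Finite

/-- `A` is an asymptotic basis for `ℕ` of some order. -/
def IsBasis (A : Set ℕ) : Prop := ∃ h, IsBasisOfOrder A h

/-- `P` is an essentiality of `A`: `A \ P` is not an asymptotic basis of any order,
and `P` is minimal (w.r.t. inclusion) among subsets of `A` with this property. -/
def IsEssentiality (A P : Set ℕ) : Prop :=
  P ⊆ A ∧ ¬ IsBasis (A \ P) ∧ ∀ Q ⊆ P, ¬ IsBasis (A \ Q) → Q = P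

/-- An essential subset is a finite essentiality. -/
def IsEssentialSubset (A P : Set ℕ) : Prop :=
  IsEssentiality A P ∧ P.Finite

/-!
With these definitions `{0}` is an essential subset of every basis, since a basis has to contain
`0`, and by minimality it is the only one containing `0`. Every other essential subset `P` has a
prime dividing all of `A \ P`, because a finite set of nonzero elements can be removed from a basis
as long as the gcd of what remains is `1`. Minimality makes the primes of distinct essential subsets
distinct. For a family of `n` essential subsets other than `{0}`, with union `U`, the product `N` of
their primes is at least `p_n#` and divides all of `A \ U`.

A large integer that is a sum of `h` elements of `A` has a summand outside the finite set `U`.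
Modulo `N` that summand vanishes and each of the others lies in `U ∪ {0}`, so counting multisets
gives `p_n# ≤ multichoose (|U| + 1) (h - 1)`.

If the family also contains `{0}`, the factor `p_{n+1}` is recovered from the spare summand and from
counting multisets rather than tuples. Let `h = t + 2` (for `h = 1` the bound above forces `n = 0`)
and `K = |U| + 2`. Since `2 ^ t * multichoose (|U| + 1) (t + 1) < K ^ (t + 1)`, it suffices that
`p_{n+1} ≤ 2 ^ t * K`. For `t = 0` this is Euclid's bound `p_{n+1} ≤ p_n# + 1`. For `t ≥ n` it
follows from `p_{n+1} ≤ 2 ^ (n + 1)`. For `0 < t < n` Bertrand's postulate, applied to the `t + 1`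
largest factors of `p_n#`, gives `p_{n+1} ^ (t + 1) ≤ 2 ^ ((t + 1) * (t + 2) / 2) * p_n#`, which is
at most `2 ^ (t * (t + 2)) * p_n# ≤ (2 ^ t * K) ^ (t + 1)`.
-/

open Finset
open scoped Pointwise

/-! ### Sumsets -/

section Sumset

variable {A P Q S F : Set ℕ}

lemma sumset_zero (A : Set ℕ) : Sumset A 0 = 0 := by
  ext n
  simp [Sumset, eq_comm]

lemma sumset_succ (A : Set ℕ) (h : ℕ) : Sumset A (h + 1) = A + Sumset A h := by
  ext n
  constructor
  · rintro ⟨_ | ⟨a, l⟩, hl, hlA, rfl⟩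
    · simp at hl
    · rw [List.forall_mem_cons] at hlA
      exact ⟨a, hlA.1, l.sum, ⟨l, by simpa using hl, hlA.2, rfl⟩, by simp⟩
  · rintro ⟨a, ha, _, ⟨l, hl, hlA, rfl⟩, rfl⟩
    exact ⟨a :: l, by simp [hl], List.forall_mem_cons.2 ⟨ha, hlA⟩, by simp⟩

lemma sumset_add (A : Set ℕ) (g h : ℕ) : Sumset A (g + h) = Sumset A g + Sumset A h := by
  induction g with
  | zero => rw [sumset_zero, zero_add, zero_add]
  | succ g ih => rw [Nat.add_right_comm, sumset_succ, sumset_succ, ih, add_assoc]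

lemma sumset_monotone (h0 : 0 ∈ A) : Monotone (Sumset A) :=
  monotone_nat_of_le_succ fun h => by
    rw [sumset_succ]
    exact Set.subset_add_right _ h0

lemma sumset_subset_add (hA : A ⊆ P + Q) (h : ℕ) : Sumset A h ⊆ Sumset P h + Sumset Q h := by
  induction h with
  | zero => simp [sumset_zero]
  | succ h ih =>
    simp only [sumset_succ]
    rw [add_add_add_comm]
    exact Set.add_subset_add hA ih

lemma finite_sumset (hA : A.Finite) (h : ℕ) : (Sumset A h).Finite := by
  induction h with
  | zero => simp [sumset_zero]
  | succ h ih =>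
    rw [sumset_succ]
    exact hA.add ih

lemma dvd_of_mem_sumset {d h n : ℕ} (hd : ∀ a ∈ A, d ∣ a) (hn : n ∈ Sumset A h) : d ∣ n := by
  obtain ⟨l, -, hlA, rfl⟩ := hn
  exact List.dvd_sum fun a ha => hd a (hlA a ha)

lemma sumset_succ_subset_union (A U : Set ℕ) (m : ℕ) :
    Sumset A (m + 1) ⊆ Sumset U (m + 1) ∪ (Sumset A m + A \ U) := by
  rintro _ ⟨l, hl, hlA, rfl⟩
  by_cases hlU : ∀ a ∈ l, a ∈ U
  · exact .inl ⟨l, hl, hlU, rfl⟩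
  · push Not at hlU
    obtain ⟨c, hcl, hcU⟩ := hlU
    have hrest : (l.erase c).sum ∈ Sumset A m :=
      ⟨l.erase c, by simp [List.length_erase_of_mem hcl, hl],
        fun a ha => hlA a (List.mem_of_mem_erase ha), rfl⟩
    exact .inr ⟨_, hrest, c, ⟨hlA c hcl, hcU⟩, (add_comm _ _).trans (List.sum_erase hcl)⟩

lemma exists_subset_sumset_of_subset_closure (h0 : 0 ∈ S) (hF : F.Finite)
    (hFS : F ⊆ AddSubmonoid.closure S) : ∃ g, F ⊆ Sumset S g := by
  have hmem : ∀ n ∈ F, ∃ g, n ∈ Sumset S g := fun n hn =>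
    have ⟨l, hl, hsum⟩ := AddSubmonoid.exists_list_of_mem_closure (hFS hn)
    ⟨l.length, l, rfl, hl, hsum⟩
  choose! g hg using hmem
  obtain ⟨b, hb⟩ := (hF.image g).bddAbove
  exact ⟨b, fun n hn => sumset_monotone h0 (hb ⟨n, hn, rfl⟩) (hg n hn)⟩

lemma ncard_image_sumset_le_multichoose {G : Type*} [AddCommMonoid G] (f : ℕ →+ G) {B : Finset G}
    (hB : ∀ a ∈ A, f a ∈ B) (m : ℕ) : (f '' Sumset A m).ncard ≤ Nat.multichoose #B m := by
  classical
  let sum : Sym B m → G := fun s => (s.1.map Subtype.val).sum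
  have hsub : f '' Sumset A m ⊆ Set.range sum := by
    rintro _ ⟨_, ⟨l, hl, hlA, rfl⟩, rfl⟩
    refine ⟨⟨(l.pmap (fun a ha => ⟨f a, hB a ha⟩) hlA : List B), by simp [hl]⟩, ?_⟩
    simp [sum, List.map_pmap, map_list_sum]
  calc (f '' Sumset A m).ncard
      ≤ (Set.range sum).ncard := Set.ncard_le_ncard hsub (Set.finite_range sum)
    _ ≤ Nat.card (Sym B m) := Finite.card_range_le sum
    _ = Nat.multichoose #B m := by
      rw [Nat.card_eq_fintype_card, Sym.card_sym_eq_multichoose, Fintype.card_coe]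

end Sumset

/-! ### Bases and divisibility -/

section Basis

variable {A P U : Set ℕ} {h m N : ℕ}

lemma IsBasis.eq_one_of_forall_dvd {d : ℕ} (hA : IsBasis A) (hd : ∀ a ∈ A, d ∣ a) : d = 1 := by
  obtain ⟨h, -, -, hfin⟩ := hA
  obtain ⟨M, hM⟩ := hfin.bddAbove
  have hdvd : ∀ n, M < n → d ∣ n := fun n hn =>
    dvd_of_mem_sumset hd (by_contra fun hc => hn.not_ge (hM hc))
  have hdvd_succ : d ∣ M + 1 + 1 := hdvd _ (by omega)
  exact Nat.dvd_one.1 ((Nat.dvd_add_right (hdvd (M + 1) (by omega))).1 hdvd_succ)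

lemma IsBasisOfOrder.isBasis_diff_of_setGcd_eq_one (hA : IsBasisOfOrder A h) (hP : P.Finite)
    (h0P : 0 ∉ P) (hgcd : Nat.setGcd (A \ P) = 1) : IsBasis (A \ P) := by
  have h0 : 0 ∈ A \ P := ⟨hA.1, h0P⟩
  obtain ⟨t, ht⟩ := Nat.exists_mem_closure_of_ge (A \ P)
  have hclosure : {t} + Sumset (insert 0 P) h ⊆ AddSubmonoid.closure (A \ P) := by
    rintro _ ⟨t, rfl, s, -, rfl⟩
    exact ht _ (Nat.le_add_right t s) (by simp [hgcd])
  obtain ⟨g, hg⟩ := exists_subset_sumset_of_subset_closure h0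
    ((Set.finite_singleton t).add (finite_sumset (hP.insert 0) h)) hclosure
  have hsplit : A ⊆ A \ P + insert 0 P := fun a ha => by
    by_cases haP : a ∈ P
    · exact ⟨0, h0, a, .inr haP, zero_add a⟩
    · exact ⟨a, ⟨ha, haP⟩, 0, .inl rfl, add_zero a⟩
  have hshift : ∀ n ∈ Sumset A h, t + n ∈ Sumset (A \ P) (h + g) := fun n hn => by
    obtain ⟨r, hr, s, hs, rfl⟩ := sumset_subset_add hsplit h hn
    rw [sumset_add]
    exact ⟨r, hr, t + s, hg ⟨t, rfl, s, hs, rfl⟩, add_left_comm r t s⟩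
  refine ⟨h + g, h0, le_add_right hA.2.1, ?_⟩
  refine ((Set.finite_Iio t).union (hA.2.2.image (t + ·))).subset fun n hn => ?_
  rcases lt_or_ge n t with hnt | hnt
  · exact .inl hnt
  · obtain ⟨n, rfl⟩ := Nat.exists_eq_add_of_le hnt
    exact .inr ⟨n, fun hmem => hn (hshift n hmem), rfl⟩

lemma IsBasisOfOrder.image_natCast_sumset_eq_univ (hA : IsBasisOfOrder A (m + 1))
    (hU : U.Finite) (hN : N ≠ 0) (hdvd : ∀ a ∈ A \ U, N ∣ a) :
    Nat.castAddMonoidHom (ZMod N) '' Sumset A m = Set.univ := by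
  have : NeZero N := ⟨hN⟩
  refine Set.eq_univ_of_forall fun r => ?_
  obtain ⟨M, hM⟩ := (hA.2.2.union (finite_sumset hU (m + 1))).bddAbove
  obtain ⟨n, hMn, hnr⟩ := Filter.frequently_atTop'.1 (Nat.frequently_modEq hN r.val) M
  have hn : n ∉ (Sumset A (m + 1))ᶜ ∪ Sumset U (m + 1) := fun hc => hMn.not_ge (hM hc)
  simp only [Set.mem_union, Set.mem_compl_iff, not_or, not_not] at hn
  obtain ⟨s, hs, c, hc, rfl⟩ := (sumset_succ_subset_union A U m hn.1).resolve_left hn.2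
  have hc_zero : (c : ZMod N) = 0 := (ZMod.natCast_eq_zero_iff c N).2 (hdvd c hc)
  refine ⟨s, hs, ?_⟩
  calc (s : ZMod N) = (s + c : ℕ) := by rw [Nat.cast_add, hc_zero, add_zero]
    _ = (r.val : ZMod N) := (ZMod.natCast_eq_natCast_iff _ _ _).2 hnr
    _ = r := ZMod.natCast_zmod_val r

lemma IsBasisOfOrder.modulus_le_multichoose (hA : IsBasisOfOrder A (m + 1)) (hU : U.Finite)
    (hN : N ≠ 0) (hdvd : ∀ a ∈ A \ U, N ∣ a) : N ≤ Nat.multichoose (U.ncard + 1) m := by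
  classical
  let residue : ℕ →+ ZMod N := Nat.castAddMonoidHom (ZMod N)
  let B : Finset (ZMod N) := insert 0 (hU.toFinset.image residue)
  have hAB : ∀ a ∈ A, residue a ∈ B := fun a ha => by
    by_cases haU : a ∈ U
    · exact mem_insert_of_mem (mem_image_of_mem _ (hU.mem_toFinset.2 haU))
    · exact mem_insert.2 (.inl ((ZMod.natCast_eq_zero_iff a N).2 (hdvd a ⟨ha, haU⟩)))
  have hcardB : #B ≤ U.ncard + 1 := by
    rw [Set.ncard_eq_toFinset_card U hU]
    exact (card_insert_le _ _).trans (Nat.add_le_add_right card_image_le 1)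
  calc N = (residue '' Sumset A m).ncard := by
        rw [hA.image_natCast_sumset_eq_univ hU hN hdvd, Set.ncard_univ, Nat.card_zmod]
    _ ≤ Nat.multichoose #B m := ncard_image_sumset_le_multichoose residue hAB m
    _ ≤ Nat.multichoose (U.ncard + 1) m := by
      simp only [Nat.multichoose_eq]
      exact Nat.choose_le_choose m (by omega)

end Basis

/-! ### Essential subsets -/

section Essential

variable {A P P' : Set ℕ} {h : ℕ}

lemma IsEssentiality.eq_singleton_zero (hP : IsEssentiality A P) (h0 : 0 ∈ P) : P = {0} :=
  (hP.2.2 {0} (Set.singleton_subset_iff.2 h0) fun ⟨_, hb⟩ => hb.1.2 rfl).symm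

lemma IsEssentialSubset.exists_prime_dvd (hP : IsEssentialSubset A P) (hA : IsBasisOfOrder A h)
    (hP0 : P ≠ {0}) : ∃ q : ℕ, q.Prime ∧ ∀ a ∈ A \ P, q ∣ a := by
  have hgcd : Nat.setGcd (A \ P) ≠ 1 := fun hgcd => hP.1.2.1 <|
    hA.isBasis_diff_of_setGcd_eq_one hP.2 (fun h0 => hP0 (hP.1.eq_singleton_zero h0)) hgcd
  obtain ⟨q, hq, hqdvd⟩ := Nat.exists_prime_and_dvd hgcd
  exact ⟨q, hq, Nat.dvd_setGcd_iff.1 hqdvd⟩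

lemma IsEssentiality.eq_of_forall_dvd {q : ℕ} (hP : IsEssentiality A P)
    (hP' : IsEssentiality A P') (hq : q ≠ 1) (hdvd : ∀ a ∈ A \ P, q ∣ a)
    (hdvd' : ∀ a ∈ A \ P', q ∣ a) : P = P' := by
  have hinter : ¬ IsBasis (A \ (P ∩ P')) := fun hbasis => hq <|
    hbasis.eq_one_of_forall_dvd fun a ha => by
      rw [Set.sdiff_inter] at ha
      exact ha.elim (hdvd a) (hdvd' a)
  exact (hP.2.2 _ Set.inter_subset_left hinter).symm.trans
    (hP'.2.2 _ Set.inter_subset_right hinter)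

lemma exists_card_eq_forall_prime_dvd (hA : IsBasisOfOrder A h) {T : Finset (Set ℕ)}
    (hT : ∀ P ∈ T, IsEssentialSubset A P) (h0 : {0} ∉ T) :
    ∃ s : Finset ℕ, #s = #T ∧ ∀ q ∈ s, q.Prime ∧ ∀ a ∈ A \ ⋃₀ (T : Set (Set ℕ)), q ∣ a := by
  classical
  choose! q hq hdvd using fun P hP =>
    (hT P hP).exists_prime_dvd hA (ne_of_mem_of_not_mem hP h0)
  have hinj : Set.InjOn q T := fun P hP P' hP' heq =>
    (hT P hP).1.eq_of_forall_dvd (hT P' hP').1 (hq P hP).ne_one (hdvd P hP)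
      (heq ▸ hdvd P' hP')
  refine ⟨T.image q, card_image_of_injOn hinj, forall_mem_image.2 fun P hP => ⟨hq P hP, ?_⟩⟩
  exact fun a ha => hdvd P hP a ⟨ha.1, fun haP => ha.2 ⟨P, hP, haP⟩⟩

end Essential

/-! ### Primorials -/

/-- The primorial `p_n#`, the product of the first `n` primes. It is indexed by the number of
factors, whereas Mathlib's `primorial` is indexed by an upper bound for them. -/
noncomputable def nthPrimorial (n : ℕ) : ℕ := ∏ i ∈ range n, Nat.nth Nat.Prime i

lemma nthPrimorial_succ (n : ℕ) :
    nthPrimorial (n + 1) = nthPrimorial n * Nat.nth Nat.Prime n := prod_range_succ _ n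

lemma nthPrimorial_pos (n : ℕ) : 0 < nthPrimorial n :=
  prod_pos fun i _ => (Nat.prime_nth_prime i).pos

lemma prod_range_nth_le_prod {p : ℕ → Prop} (s : Finset ℕ) (hs : ∀ a ∈ s, p a) :
    ∏ i ∈ range #s, Nat.nth p i ≤ ∏ a ∈ s, a := by
  classical
  induction s using Finset.induction_on_max with
  | empty => simp
  | insert a s hlt ih =>
    rw [forall_mem_insert] at hs
    have ha : a ∉ s := fun ha => (hlt a ha).false
    have hcount : #s < Nat.count p (a + 1) := by
      rw [Nat.count_succ_eq_succ_count hs.1, Nat.lt_succ_iff, Nat.count_eq_card_filter_range]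
      exact card_le_card fun x hx => mem_filter.2 ⟨mem_range.2 (hlt x hx), hs.2 x hx⟩
    rw [card_insert_of_notMem ha, prod_range_succ, prod_insert ha, mul_comm a]
    exact Nat.mul_le_mul (ih hs.2) (Nat.lt_succ_iff.1 (Nat.nth_lt_of_lt_count hcount))

lemma nth_prime_le_nthPrimorial_add_one (n : ℕ) : Nat.nth Nat.Prime n ≤ nthPrimorial n + 1 := by
  obtain ⟨q, hq, hqdvd⟩ := Nat.exists_prime_and_dvd
    (Nat.succ_ne_succ_iff.2 (nthPrimorial_pos n).ne' : nthPrimorial n + 1 ≠ 1)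
  refine le_trans ?_ (Nat.le_of_dvd (Nat.succ_pos _) hqdvd)
  by_contra! hlt
  have hcount : Nat.count Nat.Prime q < n :=
    (Nat.nth_lt_nth Nat.infinite_setOfPred_prime).1 (by rwa [Nat.nth_count hq])
  have hdvd : q ∣ nthPrimorial n := by
    conv_lhs => rw [← Nat.nth_count hq]
    exact dvd_prod_of_mem _ (mem_range.2 hcount)
  exact hq.not_dvd_one ((Nat.dvd_add_right hdvd).1 hqdvd)

lemma nth_prime_succ_le_two_mul (n : ℕ) :
    Nat.nth Nat.Prime (n + 1) ≤ 2 * Nat.nth Nat.Prime n := by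
  obtain ⟨p, hp, hlt, hle⟩ :=
    Nat.exists_prime_lt_and_le_two_mul _ (Nat.prime_nth_prime n).ne_zero
  refine le_trans ?_ hle
  by_contra! hpn
  exact hlt.not_ge (Nat.le_nth_of_lt_nth_succ hpn hp)

lemma nth_prime_le_two_pow (n : ℕ) : Nat.nth Nat.Prime n ≤ 2 ^ (n + 1) := by
  induction n with
  | zero => simp
  | succ n ih =>
    rw [pow_succ']
    exact (nth_prime_succ_le_two_mul n).trans (Nat.mul_le_mul_left 2 ih)

lemma nth_prime_pow_mul_nthPrimorial_le (r m : ℕ) :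
    Nat.nth Nat.Prime (r + m) ^ m * nthPrimorial r ≤
      2 ^ (m + 1).choose 2 * nthPrimorial (r + m) := by
  induction m with
  | zero => simp
  | succ m ih =>
    rw [← add_assoc, nthPrimorial_succ, Nat.choose_succ_succ', Nat.choose_one_right, pow_add 2]
    set p := Nat.nth Nat.Prime (r + m)
    calc Nat.nth Nat.Prime (r + m + 1) ^ (m + 1) * nthPrimorial r
        ≤ (2 * p) ^ (m + 1) * nthPrimorial r := by
          gcongr
          exact nth_prime_succ_le_two_mul _
      _ = 2 ^ (m + 1) * p * (p ^ m * nthPrimorial r) := by ring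
      _ ≤ 2 ^ (m + 1) * p * (2 ^ (m + 1).choose 2 * nthPrimorial (r + m)) := by gcongr
      _ = 2 ^ (m + 1) * 2 ^ (m + 1).choose 2 * (nthPrimorial (r + m) * p) := by ring

lemma nth_prime_pow_le {n t : ℕ} (ht : t ≠ 0) (htn : t < n) :
    Nat.nth Nat.Prime n ^ (t + 1) ≤ 2 ^ (t * (t + 2)) * nthPrimorial n := by
  obtain ⟨r, rfl⟩ := Nat.exists_eq_add_of_le' htn
  have hexp : (t + 1 + 1).choose 2 ≤ t * (t + 2) := by
    rw [Nat.choose_two_right]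
    refine Nat.div_le_of_le_mul ?_
    simp only [Nat.add_sub_cancel]
    nlinarith [Nat.pos_of_ne_zero ht]
  calc Nat.nth Nat.Prime (r + (t + 1)) ^ (t + 1)
      ≤ Nat.nth Nat.Prime (r + (t + 1)) ^ (t + 1) * nthPrimorial r :=
        Nat.le_mul_of_pos_right _ (nthPrimorial_pos r)
    _ ≤ 2 ^ (t + 1 + 1).choose 2 * nthPrimorial (r + (t + 1)) :=
        nth_prime_pow_mul_nthPrimorial_le r (t + 1)
    _ ≤ 2 ^ (t * (t + 2)) * nthPrimorial (r + (t + 1)) := by gcongr; norm_num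

lemma nth_prime_le_two_pow_mul {n t K : ℕ} (hK : 2 ^ t * nthPrimorial n < K ^ (t + 1)) :
    Nat.nth Nat.Prime n ≤ 2 ^ t * K := by
  have hK_two : 2 ≤ K := by
    by_contra! hlt
    have hpow : K ^ (t + 1) ≤ 1 := Nat.pow_le_one_iff (by omega) |>.2 (by omega)
    have hpos : 0 < 2 ^ t * nthPrimorial n := Nat.mul_pos (by positivity) (nthPrimorial_pos n)
    omega
  rcases eq_or_ne t 0 with rfl | ht
  · have heuclid := nth_prime_le_nthPrimorial_add_one n
    simp only [pow_zero, one_mul, zero_add, pow_one] at hK ⊢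
    omega
  rcases le_or_gt n t with hnt | htn
  · calc Nat.nth Nat.Prime n ≤ 2 ^ n * 2 := nth_prime_le_two_pow n
      _ ≤ 2 ^ t * K := by gcongr; norm_num
  refine (Nat.pow_left_strictMono t.succ_ne_zero).le_iff_le.1 ?_
  calc Nat.nth Nat.Prime n ^ (t + 1)
      ≤ 2 ^ (t * (t + 2)) * nthPrimorial n := nth_prime_pow_le ht htn
    _ = 2 ^ (t * (t + 1)) * (2 ^ t * nthPrimorial n) := by ring
    _ ≤ 2 ^ (t * (t + 1)) * K ^ (t + 1) := by gcongr
    _ = (2 ^ t * K) ^ (t + 1) := by rw [mul_pow, ← pow_mul]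

/-! ### Multisets against tuples -/

lemma succ_mul_multichoose_succ (x m : ℕ) :
    (m + 1) * Nat.multichoose x (m + 1) = (x + m) * Nat.multichoose x m := by
  obtain _ | x := x
  · cases m <;> simp
  · rw [Nat.multichoose_eq, Nat.multichoose_eq, show x + 1 + (m + 1) - 1 = x + m + 1 by omega,
      show x + 1 + m - 1 = x + m by omega, mul_comm, ← Nat.add_one_mul_choose_eq]
    ring

lemma multichoose_le_pow (x m : ℕ) : Nat.multichoose x m ≤ x ^ m := by
  obtain rfl | hx := x.eq_zero_or_pos
  · cases m <;> simp
  induction m with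
  | zero => simp
  | succ m ih =>
    have hfactor : x + m ≤ (m + 1) * x := by nlinarith
    refine Nat.le_of_mul_le_mul_left ?_ m.succ_pos
    calc (m + 1) * Nat.multichoose x (m + 1)
        = (x + m) * Nat.multichoose x m := succ_mul_multichoose_succ x m
      _ ≤ (m + 1) * x * x ^ m := Nat.mul_le_mul hfactor ih
      _ = (m + 1) * x ^ (m + 1) := by ring

lemma two_pow_mul_multichoose_lt (x m : ℕ) :
    2 ^ m * Nat.multichoose x (m + 1) < (x + 1) ^ (m + 1) := by
  obtain rfl | hx := x.eq_zero_or_pos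
  · simp
  induction m with
  | zero => simp
  | succ m ih =>
    have hfactor : 2 * (x + (m + 1)) ≤ (m + 2) * (x + 1) := by nlinarith
    refine lt_of_mul_lt_mul_left' (a := m + 2) ?_
    calc (m + 2) * (2 ^ (m + 1) * Nat.multichoose x (m + 2))
        = 2 ^ (m + 1) * ((m + 1 + 1) * Nat.multichoose x (m + 1 + 1)) := by ring
      _ = 2 * (x + (m + 1)) * (2 ^ m * Nat.multichoose x (m + 1)) := by
          rw [succ_mul_multichoose_succ]
          ring
      _ < (m + 2) * (x + 1) * (x + 1) ^ (m + 1) :=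
          Nat.mul_lt_mul_of_le_of_lt hfactor ih (by positivity)
      _ = (m + 2) * (x + 1) ^ (m + 1 + 1) := by ring

lemma nthPrimorial_succ_le_pow {n x m : ℕ} (hx : 0 < x)
    (hn : nthPrimorial n ≤ Nat.multichoose x m) : nthPrimorial (n + 1) ≤ (x + 1) ^ (m + 1) := by
  rw [nthPrimorial_succ]
  obtain _ | t := m
  · rw [Nat.multichoose_zero_right] at hn
    have hprime : Nat.nth Nat.Prime n ≤ x + 1 :=
      (nth_prime_le_nthPrimorial_add_one n).trans (by omega)
    simpa using Nat.mul_le_mul hn hprime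
  have hroom := two_pow_mul_multichoose_lt x t
  have hprime : Nat.nth Nat.Prime n ≤ 2 ^ t * (x + 1) :=
    nth_prime_le_two_pow_mul ((Nat.mul_le_mul_left _ hn).trans_lt hroom)
  calc nthPrimorial n * Nat.nth Nat.Prime n
      ≤ Nat.multichoose x (t + 1) * (2 ^ t * (x + 1)) := Nat.mul_le_mul hn hprime
    _ = 2 ^ t * Nat.multichoose x (t + 1) * (x + 1) := by ring
    _ ≤ (x + 1) ^ (t + 1) * (x + 1) := Nat.mul_le_mul_right _ hroom.le
    _ = (x + 1) ^ (t + 1 + 1) := (pow_succ _ _).symm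

/-! ### Families of essential subsets -/

lemma ncard_sUnion_le_mul_card {α : Type*} {k : ℕ} {T : Finset (Set α)}
    (hT : ∀ P ∈ T, P.ncard ≤ k) : (⋃₀ (T : Set (Set α))).ncard ≤ k * #T :=
  calc (⋃₀ (T : Set (Set α))).ncard
      = (⋃ P ∈ T, P).ncard := by simp only [Set.sUnion_eq_biUnion, mem_coe]
    _ ≤ ∑ P ∈ T, P.ncard := T.set_ncard_biUnion_le id
    _ ≤ #T • k := sum_le_card_nsmul T _ k hT
    _ = k * #T := mul_comm _ _

section Family

variable {A : Set ℕ} {T : Finset (Set ℕ)}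

lemma finite_sUnion_of_isEssentialSubset (hT : ∀ P ∈ T, IsEssentialSubset A P) :
    (⋃₀ (T : Set (Set ℕ))).Finite :=
  T.finite_toSet.sUnion fun P hP => (hT P hP).2

lemma nthPrimorial_card_le_multichoose {m : ℕ} (hA : IsBasisOfOrder A (m + 1))
    (hT : ∀ P ∈ T, IsEssentialSubset A P) (h0 : {0} ∉ T) :
    nthPrimorial #T ≤ Nat.multichoose ((⋃₀ (T : Set (Set ℕ))).ncard + 1) m := by
  obtain ⟨s, hcard, hs⟩ := exists_card_eq_forall_prime_dvd hA hT h0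
  calc nthPrimorial #T
      ≤ ∏ q ∈ s, q := hcard ▸ prod_range_nth_le_prod s fun q hq => (hs q hq).1
    _ ≤ Nat.multichoose ((⋃₀ (T : Set (Set ℕ))).ncard + 1) m :=
      hA.modulus_le_multichoose (finite_sUnion_of_isEssentialSubset hT)
        (prod_ne_zero_iff.2 fun q hq => (hs q hq).1.ne_zero)
        fun a ha => prod_primes_dvd a (fun q hq => (hs q hq).1.prime) fun q hq => (hs q hq).2 a ha

lemma ncard_sUnion_erase_singleton_zero [DecidableEq (Set ℕ)]
    (hT : ∀ P ∈ T, IsEssentialSubset A P) (h0 : {0} ∈ T) :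
    (⋃₀ (T.erase {0} : Set (Set ℕ))).ncard + 1 = (⋃₀ (T : Set (Set ℕ))).ncard := by
  have hT' : ∀ P ∈ T.erase {0}, IsEssentialSubset A P := fun P hP => hT P (mem_of_mem_erase hP)
  have hzero : 0 ∉ ⋃₀ (T.erase {0} : Set (Set ℕ)) := fun ⟨P, hP, h0P⟩ =>
    ne_of_mem_erase hP ((hT' P hP).1.eq_singleton_zero h0P)
  rw [← Set.ncard_insert_of_notMem hzero (finite_sUnion_of_isEssentialSubset hT'),
    ← Set.singleton_union, ← Set.sUnion_insert, ← coe_insert, insert_erase h0]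

theorem essential_subsets_primorial_bound_general {h : ℕ} (hA : IsBasisOfOrder A h)
    (hT : ∀ P ∈ T, IsEssentialSubset A P) :
    ∏ i ∈ range #T, Nat.nth Nat.Prime i ≤ ((⋃₀ (T : Set (Set ℕ))).ncard + 1) ^ h := by
  classical
  change nthPrimorial #T ≤ _
  obtain ⟨m, rfl⟩ := Nat.exists_eq_add_of_le' hA.2.1
  by_cases h0 : {0} ∈ T
  · have herase := nthPrimorial_card_le_multichoose hA
      (fun P hP => hT P (mem_of_mem_erase hP)) (notMem_erase {0} T)
    rw [← card_erase_add_one h0, ← ncard_sUnion_erase_singleton_zero hT h0]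
    exact nthPrimorial_succ_le_pow (Nat.succ_pos _) herase
  · calc nthPrimorial #T
        ≤ Nat.multichoose ((⋃₀ (T : Set (Set ℕ))).ncard + 1) m :=
          nthPrimorial_card_le_multichoose hA hT h0
      _ ≤ ((⋃₀ (T : Set (Set ℕ))).ncard + 1) ^ m := multichoose_le_pow _ _
      _ ≤ ((⋃₀ (T : Set (Set ℕ))).ncard + 1) ^ (m + 1) :=
          Nat.pow_le_pow_right (Nat.succ_pos _) m.le_succ

end Family

/-- If a basis of order `h` has exactly `φ` essential subsets of cardinality at most `k`,
then `(k*φ+1)^h ≥ p_φ#`, the product of the first `φ` primes. -/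
theorem essential_subsets_primorial_bound (A : Set ℕ) (h k φ : ℕ)
    (hA : IsBasisOfOrder A h)
    (hfin : {P : Set ℕ | IsEssentialSubset A P ∧ P.ncard ≤ k}.Finite)
    (hcard : {P : Set ℕ | IsEssentialSubset A P ∧ P.ncard ≤ k}.ncard = φ) :
    (k * φ + 1) ^ h ≥ ∏ i ∈ Finset.range φ, Nat.nth Nat.Prime i := by
  rw [← hcard, Set.ncard_eq_toFinset_card _ hfin]
  have hT : ∀ P ∈ hfin.toFinset, IsEssentialSubset A P ∧ P.ncard ≤ k := fun _ => hfin.mem_toFinset.1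
  exact (essential_subsets_primorial_bound_general hA fun P hP => (hT P hP).1).trans <|
    Nat.pow_le_pow_left (Nat.succ_le_succ (ncard_sUnion_le_mul_card fun P hP => (hT P hP).2)) h
end

section
/- Fix an integer h ≥ 1. For every ε > 0 there exists K such that for all integers k ≥ K, every asymptotic basis for ℕ₀ of order h contains at most ε·log k essential subsets of cardinality at most k. (Equivalently, the maximal number φ(k,h) of essential subsets of size at most k in a basis of order h satisfies φ(k,h) = o(log k) as k → ∞ with h fixed.) -/
/-!
A set `B ∋ 0` that contains all but finitely many elements of a basis is itself a basis exactly
when its gcd is `1`: for some `N` and `m`, every `a + N` with `a` in the basis is a sum of `m`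
elements of `B`. Hence an essential subset `P` of `A` is either `{0}` or `{a ∈ A | ¬ p ∣ a}` for a
prime `p`.

Take `n` essential subsets of the second kind and let `M` be the product of their primes. An
element of `A` that is nonzero modulo `M` lies in one of these `n` sets of size at most `k`, so `A`
has at most `n * k + 1` residues modulo `M`. Their `h`-fold sums cover all residues, so
`n ! ≤ M ≤ (n * k + 1) ^ h`. If `k ≤ exp ((n + 1) / ε)`, the right-hand side is at most exponential
in `n`, which bounds `n`.
-/

open Filter
open scoped Nat

-- `open scoped Pointwise` would also give `h • A` the meaning `{h * a | a ∈ A}`; here it is the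
-- `h`-fold sumset.
attribute [local instance] Set.addMonoid Set.addCommMonoid Finset.addMonoid

section AddMonoid

variable {M : Type*} [AddMonoid M] {s t : Set M}

lemma exists_mem_nsmul_of_mem_closure {x : M} (hx : x ∈ AddSubmonoid.closure s) :
    ∃ m : ℕ, x ∈ m • s := by
  induction hx using AddSubmonoid.closure_induction with
  | mem x hx => exact ⟨1, by rwa [one_nsmul]⟩
  | zero => exact ⟨0, by rw [zero_nsmul]; exact Set.zero_mem_zero⟩
  | add x y _ _ ihx ihy =>
    obtain ⟨m, hm⟩ := ihx
    obtain ⟨n, hn⟩ := ihy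
    exact ⟨m + n, by rw [add_nsmul]; exact Set.add_mem_add hm hn⟩

lemma exists_subset_nsmul_of_finite_of_subset_closure (h0 : 0 ∈ s) (ht : t.Finite)
    (hts : t ⊆ AddSubmonoid.closure s) : ∃ m : ℕ, t ⊆ m • s := by
  choose! m hm using fun x (hx : x ∈ t) => exists_mem_nsmul_of_mem_closure (hts hx)
  obtain ⟨b, hb⟩ := (ht.image m).bddAbove
  exact ⟨b, fun x hx =>
    Set.nsmul_subset_nsmul_right h0 (hb (Set.mem_image_of_mem m hx)) (hm x hx)⟩

lemma ncard_nsmul_le (hs : s.Finite) (n : ℕ) : (n • s).ncard ≤ s.ncard ^ n := by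
  classical
  lift s to Finset M using hs
  rw [← Finset.coe_nsmul, Set.ncard_coe_finset, Set.ncard_coe_finset]
  exact Finset.card_nsmul_le

end AddMonoid

section Basis

variable {A B : Set ℕ} {h : ℕ}

lemma sumset_eq_nsmul (A : Set ℕ) (h : ℕ) : Sumset A h = h • A := by
  ext n
  rw [Set.mem_nsmul]
  constructor
  · rintro ⟨l, rfl, hl, rfl⟩
    exact ⟨fun i => ⟨l.get i, hl _ (l.get_mem i)⟩, by rw [List.ofFn_get]⟩
  · rintro ⟨f, rfl⟩
    refine ⟨_, List.length_ofFn, fun x hx => ?_, rfl⟩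
    obtain ⟨i, rfl⟩ := List.mem_ofFn.1 hx
    exact (f i).2

lemma isBasisOfOrder_iff :
    IsBasisOfOrder A h ↔ 0 ∈ A ∧ 1 ≤ h ∧ ∀ᶠ n in atTop, n ∈ h • A := by
  rw [IsBasisOfOrder, sumset_eq_nsmul, ← mem_cofinite, Nat.cofinite_eq_atTop]
  rfl

lemma IsBasisOfOrder.of_forall_add_mem_nsmul {N m : ℕ} (hA : IsBasisOfOrder A h) (h0 : 0 ∈ B)
    (hm : 1 ≤ m) (hAB : ∀ a ∈ A, a + N ∈ m • B) : IsBasisOfOrder B (h * m) := by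
  obtain ⟨-, hh, hA⟩ := isBasisOfOrder_iff.1 hA
  have hshift : h • A + {h * N} ⊆ (h * m) • B :=
    calc h • A + {h * N} = h • (A + {N}) := by
          rw [nsmul_add, Set.nsmul_singleton, smul_eq_mul]
      _ ⊆ h • m • B := by
          rw [Set.add_singleton]
          exact Set.nsmul_subset_nsmul_left (Set.image_subset_iff.2 hAB)
      _ = (h * m) • B := (mul_nsmul' B h m).symm
  refine isBasisOfOrder_iff.2 ⟨h0, Nat.mul_pos hh hm, ?_⟩
  filter_upwards [(tendsto_sub_atTop_nat (h * N)).eventually hA, eventually_ge_atTop (h * N)]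
    with n hn hle
  exact hshift ⟨_, hn, _, rfl, Nat.sub_add_cancel hle⟩

lemma IsBasis.of_finite_diff_of_setGcd_eq_one (hA : IsBasis A) (h0 : 0 ∈ B)
    (hfin : (A \ B).Finite) (hgcd : Nat.setGcd B = 1) : IsBasis B := by
  obtain ⟨h, hA⟩ := hA
  obtain ⟨N, hN⟩ := Nat.exists_mem_closure_of_ge B
  obtain ⟨m, hm⟩ : ∃ m : ℕ, (· + N) '' insert 0 (A \ B) ⊆ m • B := by
    refine exists_subset_nsmul_of_finite_of_subset_closure h0 ((hfin.insert 0).image _) ?_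
    rintro _ ⟨a, -, rfl⟩
    exact hN _ (Nat.le_add_left N a) (hgcd ▸ one_dvd _)
  refine ⟨h * (m + 1), hA.of_forall_add_mem_nsmul (N := N) h0 (Nat.le_add_left 1 m) fun a ha => ?_⟩
  by_cases haB : a ∈ B
  · have hNm : N ∈ m • B := by simpa using hm ⟨0, Set.mem_insert _ _, rfl⟩
    rw [succ_nsmul']
    exact Set.add_mem_add haB hNm
  · exact Set.nsmul_subset_nsmul_right h0 (Nat.le_succ m)
      (hm ⟨a, Set.mem_insert_of_mem _ ⟨ha, haB⟩, rfl⟩)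

lemma IsBasis.setGcd_eq_one (hB : IsBasis B) : Nat.setGcd B = 1 := by
  obtain ⟨h, hB⟩ := hB
  obtain ⟨N, hN⟩ := eventually_atTop.1 (isBasisOfOrder_iff.1 hB).2.2
  have hdvd : ∀ n ≥ N, Nat.setGcd B ∣ n := fun n hn =>
    Nat.setGcd_dvd_of_mem_closure (AddSubmonoid.nsmul_subset AddSubmonoid.subset_closure (hN n hn))
  exact Nat.dvd_one.1 ((Nat.dvd_add_right (hdvd N le_rfl)).1 (hdvd (N + 1) N.le_succ))

/-- The exception `{0}` is there because a basis has to contain `0`. -/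
lemma IsEssentialSubset.exists_prime_eq_sep_not_dvd {P : Set ℕ} (hA : IsBasis A)
    (hP : IsEssentialSubset A P) (hne : P ≠ {0}) :
    ∃ p : ℕ, p.Prime ∧ P = {a ∈ A | ¬ p ∣ a} := by
  obtain ⟨⟨-, hnot, hmin⟩, hfin⟩ := hP
  have h0P : 0 ∉ P := fun h0 =>
    hne (hmin {0} (Set.singleton_subset_iff.2 h0) fun ⟨_, hbasis⟩ => hbasis.1.2 rfl).symm
  have h0A : 0 ∈ A := let ⟨_, hAh⟩ := hA; hAh.1
  have hgcd : Nat.setGcd (A \ P) ≠ 1 := fun hgcd =>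
    hnot (hA.of_finite_diff_of_setGcd_eq_one ⟨h0A, h0P⟩ (hfin.subset (by simp)) hgcd)
  obtain ⟨p, hp, hdvd⟩ := Nat.exists_prime_and_dvd hgcd
  refine ⟨p, hp, (hmin {a ∈ A | ¬ p ∣ a} ?_ fun hbasis => hp.not_dvd_one ?_).symm⟩
  · rintro a ⟨haA, hpa⟩
    by_contra haP
    exact hpa (Nat.dvd_setGcd_iff.1 hdvd a ⟨haA, haP⟩)
  · rw [← hbasis.setGcd_eq_one, Nat.dvd_setGcd_iff]
    rintro b ⟨hbA, hb⟩
    exact not_not.1 fun hpb => hb ⟨hbA, hpb⟩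

end Basis

section Counting

variable {A : Set ℕ} {h k : ℕ}

lemma IsBasisOfOrder.nsmul_image_natCast_eq_univ (hA : IsBasisOfOrder A h) (d : ℕ) [NeZero d] :
    h • (Nat.cast '' A : Set (ZMod d)) = Set.univ := by
  obtain ⟨N, hN⟩ := eventually_atTop.1 (isBasisOfOrder_iff.1 hA).2.2
  have himage : Nat.cast '' (h • A) = h • (Nat.cast '' A : Set (ZMod d)) :=
    Set.image_nsmul (Nat.castAddMonoidHom (ZMod d)) A h
  refine Set.eq_univ_of_forall fun r => himage ▸ ⟨r.val + d * N, hN _ ?_, by simp⟩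
  exact (Nat.le_mul_of_pos_left N (NeZero.pos d)).trans (Nat.le_add_left _ _)

lemma ncard_image_natCast_le {d : ℕ} (hfin : {a ∈ A | ¬ d ∣ a}.Finite) :
    (Nat.cast '' A : Set (ZMod d)).ncard ≤ {a ∈ A | ¬ d ∣ a}.ncard + 1 := by
  set U := {a ∈ A | ¬ d ∣ a}
  have hsub : (Nat.cast '' A : Set (ZMod d)) ⊆ insert 0 (Nat.cast '' U) := by
    rintro _ ⟨a, ha, rfl⟩
    by_cases hd : d ∣ a
    · exact Or.inl ((ZMod.natCast_eq_zero_iff a d).2 hd)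
    · exact Or.inr ⟨a, ⟨ha, hd⟩, rfl⟩
  calc (Nat.cast '' A : Set (ZMod d)).ncard
      ≤ (insert 0 (Nat.cast '' U : Set (ZMod d))).ncard :=
        Set.ncard_le_ncard hsub ((hfin.image _).insert 0)
    _ ≤ (Nat.cast '' U : Set (ZMod d)).ncard + 1 := Set.ncard_insert_le _ _
    _ ≤ U.ncard + 1 := by gcongr; exact Set.ncard_image_le hfin

lemma IsBasisOfOrder.le_ncard_sep_not_dvd_add_one_pow (hA : IsBasisOfOrder A h) {d : ℕ}
    (hfin : {a ∈ A | ¬ d ∣ a}.Finite) : d ≤ ({a ∈ A | ¬ d ∣ a}.ncard + 1) ^ h := by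
  rcases eq_or_ne d 0 with rfl | hd
  · exact Nat.zero_le _
  have : NeZero d := ⟨hd⟩
  calc d = (h • (Nat.cast '' A : Set (ZMod d))).ncard := by
        rw [hA.nsmul_image_natCast_eq_univ, Set.ncard_univ, Nat.card_zmod]
    _ ≤ (Nat.cast '' A : Set (ZMod d)).ncard ^ h := ncard_nsmul_le (Set.toFinite _) h
    _ ≤ ({a ∈ A | ¬ d ∣ a}.ncard + 1) ^ h := by gcongr; exact ncard_image_natCast_le hfin

lemma IsBasisOfOrder.lcm_le_card_mul_add_one_pow {ι : Type*} (hA : IsBasisOfOrder A h)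
    (s : Finset ι) (d : ι → ℕ) (hfin : ∀ i ∈ s, {a ∈ A | ¬ d i ∣ a}.Finite)
    (hk : ∀ i ∈ s, {a ∈ A | ¬ d i ∣ a}.ncard ≤ k) : s.lcm d ≤ (s.card * k + 1) ^ h := by
  have hunion : {a ∈ A | ¬ s.lcm d ∣ a} = ⋃ i ∈ s, {a ∈ A | ¬ d i ∣ a} := by
    ext a
    simp [Finset.lcm_dvd_iff]
  have hcard : {a ∈ A | ¬ s.lcm d ∣ a}.ncard ≤ s.card * k :=
    calc {a ∈ A | ¬ s.lcm d ∣ a}.ncard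
        ≤ ∑ i ∈ s, {a ∈ A | ¬ d i ∣ a}.ncard := hunion ▸ s.set_ncard_biUnion_le _
      _ ≤ s.card * k := Finset.sum_le_card_nsmul s _ k hk
  have hfinite : {a ∈ A | ¬ s.lcm d ∣ a}.Finite := hunion ▸ s.finite_toSet.biUnion hfin
  exact (hA.le_ncard_sep_not_dvd_add_one_pow hfinite).trans (by gcongr)

lemma factorial_card_le_prod_id {s : Finset ℕ} (hs : 0 ∉ s) : s.card ! ≤ ∏ x ∈ s, x := by
  induction s using Finset.induction_on_max with
  | empty => simp
  | insert a s hlt ih =>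
    simp only [Finset.mem_insert, not_or] at hs
    have has : a ∉ s := fun ha => (hlt a ha).false
    have hcard : s.card + 1 ≤ a := by
      have hsub : insert 0 s ⊆ Finset.range a := by
        simpa [Finset.insert_subset_iff, Finset.subset_iff] using
          ⟨Nat.pos_of_ne_zero (Ne.symm hs.1), hlt⟩
      simpa [hs.2] using Finset.card_le_card hsub
    rw [Finset.card_insert_of_notMem has, Finset.prod_insert has, Nat.factorial_succ]
    exact Nat.mul_le_mul hcard (ih hs.2)

lemma factorial_card_le_prod {ι : Type*} {s : Finset ι} {f : ι → ℕ} (hf : Set.InjOn f s)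
    (hpos : ∀ i ∈ s, 0 < f i) : s.card ! ≤ ∏ i ∈ s, f i := by
  have h0 : 0 ∉ s.image f := fun h0 =>
    let ⟨i, hi, hi0⟩ := Finset.mem_image.1 h0
    (hpos i hi).ne' hi0
  simpa only [Finset.card_image_of_injOn hf, Finset.prod_image hf] using
    factorial_card_le_prod_id h0

lemma IsBasisOfOrder.factorial_card_essentialSubsets_le (hA : IsBasisOfOrder A h)
    {Ps : Finset (Set ℕ)} (h0 : {0} ∉ Ps)
    (hPs : ∀ P ∈ Ps, IsEssentialSubset A P ∧ P.ncard ≤ k) :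
    Ps.card ! ≤ (Ps.card * k + 1) ^ h := by
  choose! p hp hPp using fun P (hP : P ∈ Ps) =>
    (hPs P hP).1.exists_prime_eq_sep_not_dvd ⟨h, hA⟩ (ne_of_mem_of_not_mem hP h0)
  have hinj : Set.InjOn p Ps := fun P hP Q hQ hPQ => by rw [hPp P hP, hPp Q hQ, hPQ]
  have hcoprime : (Ps : Set (Set ℕ)).Pairwise (Function.onFun Nat.Coprime p) :=
    fun P hP Q hQ hPQ => (Nat.coprime_primes (hp P hP) (hp Q hQ)).2 (hinj.ne hP hQ hPQ)
  calc Ps.card ! ≤ ∏ P ∈ Ps, p P := factorial_card_le_prod hinj fun P hP => (hp P hP).pos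
    _ = Ps.lcm p := (Finset.lcm_eq_prod hcoprime).symm
    _ ≤ (Ps.card * k + 1) ^ h := hA.lcm_le_card_mul_add_one_pow Ps p
        (fun P hP => hPp P hP ▸ (hPs P hP).1.2) fun P hP => hPp P hP ▸ (hPs P hP).2

end Counting

section Asymptotics

lemma eventually_mul_exp_pow_lt_factorial (h : ℕ) (c : ℝ) :
    ∀ᶠ n : ℕ in atTop, ((n + 1) * Real.exp (c * (n + 1))) ^ h < (n ! : ℝ) := by
  filter_upwards [FloorSemiring.eventually_mul_pow_lt_factorial_sub
    (Real.exp c ^ h) (Real.exp (1 + c) ^ h) 0] with n hn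
  calc ((n + 1) * Real.exp (c * (n + 1))) ^ h
      ≤ (Real.exp n * Real.exp (c * (n + 1))) ^ h := by gcongr; exact Real.add_one_le_exp _
    _ = (Real.exp c * Real.exp (1 + c) ^ n) ^ h := by
        rw [← Real.exp_nat_mul, ← Real.exp_add, ← Real.exp_add]
        ring_nf
    _ = Real.exp c ^ h * (Real.exp (1 + c) ^ h) ^ n := by rw [mul_pow, pow_right_comm]
    _ < (n ! : ℝ) := hn

lemma eventually_forall_factorial_le_imp_add_one_le_mul_log (h : ℕ) {ε : ℝ} (hε : 0 < ε) :
    ∀ᶠ k : ℕ in atTop, ∀ n : ℕ, n ! ≤ (n * k + 1) ^ h → (n + 1 : ℝ) ≤ ε * Real.log k := by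
  obtain ⟨n₀, hn₀⟩ := eventually_atTop.1 (eventually_mul_exp_pow_lt_factorial h ε⁻¹)
  have hlog : Tendsto (fun k : ℕ => ε * Real.log k) atTop atTop :=
    (Real.tendsto_log_atTop.comp tendsto_natCast_atTop_atTop).const_mul_atTop hε
  filter_upwards [hlog.eventually_ge_atTop (n₀ + 1 : ℝ)] with k hk n hfac
  by_contra! hlt
  have hn : n₀ ≤ n := by
    have : (n₀ : ℝ) ≤ n := by linarith
    exact_mod_cast this
  have hkexp : (k : ℝ) ≤ Real.exp (ε⁻¹ * (n + 1)) :=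
    (Real.le_exp_log k).trans (Real.exp_le_exp.2 ((le_inv_mul_iff₀ hε).2 hlt.le))
  have hexp : 1 ≤ Real.exp (ε⁻¹ * (n + 1)) := Real.one_le_exp (by positivity)
  refine (hn₀ n hn).not_ge ?_
  calc (n ! : ℝ) ≤ (n * k + 1) ^ h := by exact_mod_cast hfac
    _ ≤ (n * Real.exp (ε⁻¹ * (n + 1)) + Real.exp (ε⁻¹ * (n + 1))) ^ h := by gcongr
    _ = ((n + 1) * Real.exp (ε⁻¹ * (n + 1))) ^ h := by rw [add_one_mul]

end Asymptotics

/-- With `h` fixed, the number of essential subsets of size at most `k` in a basis of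
order `h` is `o(log k)` as `k → ∞`. -/
theorem essential_subsets_count_little_o_log (h : ℕ) (hh : 1 ≤ h) :
    ∀ ε : ℝ, 0 < ε → ∃ K : ℕ, ∀ k : ℕ, K ≤ k →
      ∀ A : Set ℕ, IsBasisOfOrder A h →
        ∀ Ps : Finset (Set ℕ), (∀ P ∈ Ps, IsEssentialSubset A P ∧ P.ncard ≤ k) →
          (Ps.card : ℝ) ≤ ε * Real.log k := by
  classical
  intro ε hε
  obtain ⟨K, hK⟩ :=
    eventually_atTop.1 (eventually_forall_factorial_le_imp_add_one_le_mul_log h hε)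
  refine ⟨K, fun k hk A hA Ps hPs => ?_⟩
  have hfac := hA.factorial_card_essentialSubsets_le (Finset.notMem_erase {0} Ps)
    fun P hP => hPs P (Finset.mem_of_mem_erase hP)
  calc (Ps.card : ℝ) ≤ (Ps.erase {0}).card + 1 := by
        exact_mod_cast tsub_le_iff_right.1 Finset.pred_card_le_card_erase
    _ ≤ ε * Real.log k := hK k hk _ hfac
end
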